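/- arXiv:2602.15479 — 2 statements merged into one kernel-verified Lean document; each statement's English description precedes it below -/
import Mathlib

section
/- Fix δ > 0 and define u(x,y) = -(y² + δ²)/(1+x)² and v(x,y) = 2y/(1+x) on the half-plane Ω = {(x,y) : x > -1}. Then (u,v) is a solution of the system: u_x - α v_y = 0 and v_x + u_y - β v_y = 0 at every point of Ω, where α(x,y) = (y²+δ²)/(1+x)² and β(x,y) = -2y/(1+x). (This is the real solution pair corresponding to w = λ².) -/
/-- Coefficient α of the δ-family. -/
noncomputable def alphaC (δ x y : ℝ) : ℝ := (y ^ 2 + δ ^ 2) / (1 + x) ^ 2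

/-- Coefficient β of the δ-family. -/
noncomputable def betaC (x y : ℝ) : ℝ := -2 * y / (1 + x)

/-!
The polynomial `X² + β X + α` has the roots `λ = (y + iδ) / (1 + x)` and `conj λ`, so `α = |λ|²`
and `β = -2 Re λ`. As `λ` satisfies the complex Burgers equation `λ_x + λ λ_y = 0`, every
holomorphic function of `λ`, in particular `w = λ²`, satisfies `w_x + λ w_y = 0`, and the system
is this equation in the real basis `(1, λ)`. The coordinates of `λ² = -α - β λ` are `u = -|λ|²`
and `v = 2 Re λ`. For them, substituting `λ_x = -λ λ_y` gives directly `u_x = 2 |λ|² Re λ_y`,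
`v_y = 2 Re λ_y` and `v_x + u_y = -2 Re ((λ + conj λ) λ_y) = -4 Re λ Re λ_y`.
-/

open Complex ComplexConjugate

/-- The system `u_x - α v_y = 0`, `v_x + u_y - β v_y = 0` at the point `(x, y)`, the existence of
all four partial derivatives being part of the assertion. -/
def SolvesSystemAt (α β u v : ℝ → ℝ → ℝ) (x y : ℝ) : Prop :=
  ∃ ux uy vx vy : ℝ,
    HasDerivAt (fun t => u t y) ux x ∧
    HasDerivAt (fun t => u x t) uy y ∧
    HasDerivAt (fun t => v t y) vx x ∧
    HasDerivAt (fun t => v x t) vy y ∧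
    ux - α x y * vy = 0 ∧
    vx + uy - β x y * vy = 0

/-- The complex Burgers equation `l_x + l l_y = 0` at the point `(x, y)`, for a complex-valued
function of two real variables, the existence of both partial derivatives being part of the
assertion. -/
def SolvesBurgersAt (l : ℝ → ℝ → ℂ) (x y : ℝ) : Prop :=
  ∃ lx ly : ℂ,
    HasDerivAt (fun t => l t y) lx x ∧
    HasDerivAt (fun t => l x t) ly y ∧
    lx + l x y * ly = 0

/-- The root `(y + iδ) / (1 + x)` of `X² + β X + α`, which lies in the upper half-plane when `δ` and
`1 + x` are positive. -/
noncomputable def structureRoot (δ x y : ℝ) : ℂ := (y + δ * I) / (1 + x)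

section Burgers

variable {f : ℝ → ℂ} {f' : ℂ} {t : ℝ}

theorem hasDerivAt_re_comp (hf : HasDerivAt f f' t) :
    HasDerivAt (fun s => (f s).re) f'.re t :=
  reCLM.hasFDerivAt.comp_hasDerivAt t hf

theorem hasDerivAt_normSq_comp (hf : HasDerivAt f f' t) :
    HasDerivAt (fun s => normSq (f s)) (2 * (conj (f t) * f').re) t := by
  simpa only [normSq_eq_norm_sq, Complex.inner, mul_comm] using hf.norm_sq

theorem SolvesBurgersAt.solvesSystemAt {l : ℝ → ℝ → ℂ} {x y : ℝ} (h : SolvesBurgersAt l x y) :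
    SolvesSystemAt (fun x y => normSq (l x y)) (fun x y => -(2 * (l x y).re))
      (fun x y => -normSq (l x y)) (fun x y => 2 * (l x y).re) x y := by
  obtain ⟨lx, ly, hlx, hly, hl⟩ := h
  obtain rfl : lx = -(l x y * ly) := eq_neg_of_add_eq_zero_left hl
  refine ⟨_, _, _, _, (hasDerivAt_normSq_comp hlx).fun_neg, (hasDerivAt_normSq_comp hly).fun_neg,
    (hasDerivAt_re_comp hlx).const_mul 2, (hasDerivAt_re_comp hly).const_mul 2, ?_, ?_⟩
  · have conj_mul_lx : conj (l x y) * -(l x y * ly) = -(normSq (l x y) * ly) := by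
      rw [normSq_eq_conj_mul_self]; ring
    rw [conj_mul_lx, neg_re, re_ofReal_mul]; ring
  · have add_conj_mul_ly : l x y * ly + conj (l x y) * ly = (2 * (l x y).re : ℝ) * ly := by
      rw [← add_mul, add_conj]
    have re_add := congrArg re add_conj_mul_ly
    rw [add_re, re_ofReal_mul] at re_add
    rw [neg_re]; linear_combination (-2) * re_add

end Burgers

section StructureRoot

variable (δ x y : ℝ)

theorem normSq_structureRoot :
    normSq (structureRoot δ x y) = (y ^ 2 + δ ^ 2) / (1 + x) ^ 2 := by
  rw [structureRoot, normSq_div, normSq_add_mul_I, ← ofReal_one, ← ofReal_add, normSq_ofReal,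
    ← pow_two]

theorem two_mul_re_structureRoot : 2 * (structureRoot δ x y).re = 2 * y / (1 + x) := by
  rw [structureRoot, ← ofReal_one, ← ofReal_add, div_ofReal_re, ← mk_eq_add_mul_I, mul_div_assoc]

variable {x}

theorem solvesBurgersAt_structureRoot (hx : x ≠ -1) :
    SolvesBurgersAt (structureRoot δ) x y := by
  have hx' : (1 + x : ℂ) ≠ 0 := by
    exact_mod_cast fun h : 1 + x = 0 => hx (by linarith)
  have hasDerivAt_x : HasDerivAt (fun t : ℝ => structureRoot δ t y)
      (-(y + δ * I) / (1 + x) ^ 2) x := by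
    simpa only [structureRoot, ofReal_one, zero_mul, mul_one, zero_sub] using
      (hasDerivAt_const x (y + δ * I)).fun_div (hasDerivAt_id' x |>.ofReal_comp.const_add 1) hx'
  have hasDerivAt_y : HasDerivAt (fun t : ℝ => structureRoot δ x t) (1 / (1 + x)) y :=
    ((hasDerivAt_id' y).ofReal_comp.add_const (δ * I)).div_const (1 + x : ℂ)
  refine ⟨_, _, hasDerivAt_x, hasDerivAt_y, ?_⟩
  rw [structureRoot]
  field_simp
  ring

theorem stmt_13_general (hx : x ≠ -1) :
    SolvesSystemAt (alphaC δ) betaC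
      (fun x y => -((y ^ 2 + δ ^ 2) / (1 + x) ^ 2)) (fun x y => 2 * y / (1 + x)) x y := by
  have alphaC_eq : alphaC δ = fun x y => normSq (structureRoot δ x y) := by
    funext x y
    rw [alphaC, normSq_structureRoot]
  have betaC_eq : betaC = fun x y => -(2 * (structureRoot δ x y).re) := by
    funext x y
    rw [betaC, two_mul_re_structureRoot, neg_mul, neg_div]
  simpa only [alphaC_eq, betaC_eq, normSq_structureRoot, two_mul_re_structureRoot] using
    (solvesBurgersAt_structureRoot δ y hx).solvesSystemAt

end StructureRoot

/-- the explicit pair `u = -(y²+δ²)/(1+x)²`, `v = 2y/(1+x)`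
solves the system `u_x - α v_y = 0`, `v_x + u_y - β v_y = 0` on Ω. -/
theorem stmt_13 (δ : ℝ) (hδ : 0 < δ) :
    ∀ x y : ℝ, -1 < x →
      ∃ ux uy vx vy : ℝ,
        HasDerivAt (fun t : ℝ => -((y ^ 2 + δ ^ 2) / (1 + t) ^ 2)) ux x ∧
        HasDerivAt (fun t : ℝ => -((t ^ 2 + δ ^ 2) / (1 + x) ^ 2)) uy y ∧
        HasDerivAt (fun t : ℝ => 2 * y / (1 + t)) vx x ∧
        HasDerivAt (fun t : ℝ => 2 * t / (1 + x)) vy y ∧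
        ux - alphaC δ x y * vy = 0 ∧
        vx + uy - betaC x y * vy = 0 := by
  intro x y hx
  exact stmt_13_general δ y hx.ne'
end

section
/- Fix δ > 0. Suppose w₁ and w₂ are C¹ complex-valued functions on an open connected neighborhood U ⊆ Ω of a segment of the line Γ = {x = 0}, both satisfying the transport equation w_x + λ w_y = 0 on U (with λ(x,y) = (y+iδ)/(1+x)) and agreeing on Γ ∩ U, and suppose every point of U is joined to Γ ∩ U by a characteristic curve y = C(1+x) lying in U. Then w₁ = w₂ on U. -/
open Complex

/-- The spectral parameter λ of the δ-family. -/
noncomputable def lamC (δ x y : ℝ) : ℂ := ((y : ℂ) + δ * Complex.I) / (1 + x)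

/-!
The coefficient `λ` is itself a solution, `λ_x + λ λ_y = 0`, and for `δ ≠ 0` it maps `{x ≠ -1}`
diffeomorphically onto `{Im z ≠ 0}`. The differential of any solution annihilates the complex
vector `∂_x + λ ∂_y`, as that of `λ` does, hence is a complex multiple of the latter. So every
solution is a holomorphic function of `λ` (equivalently of the conserved quantity `ζ = λ - iδ`),
and uniqueness is the identity theorem.
-/

open Set Filter Topology

section TransportEquation

variable {E : Type*} [NormedAddCommGroup E] [NormedSpace ℂ E]
  {c : ℝ × ℝ → ℂ} {U : Set (ℝ × ℝ)}

/-- `w` is a solution of the transport equation `w_x + c w_y = 0` on `U`. Only real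
differentiability in the plane is required, and the partial derivatives are read off from the
Fréchet derivative. -/
def IsTransportSolutionOn (c : ℝ × ℝ → ℂ) (w : ℝ × ℝ → E) (U : Set (ℝ × ℝ)) : Prop :=
  ∀ p ∈ U, DifferentiableAt ℝ w p ∧ fderiv ℝ w p (1, 0) + c p • fderiv ℝ w p (0, 1) = 0

theorem hasFDerivAt_of_continuousOn_partials {F : Type*} [NormedAddCommGroup F] [NormedSpace ℝ F]
    {w wx wy : ℝ → ℝ → F} (hU : IsOpen U)
    (hx : ∀ p ∈ U, HasDerivAt (fun t ↦ w t p.2) (wx p.1 p.2) p.1)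
    (hy : ∀ p ∈ U, HasDerivAt (fun t ↦ w p.1 t) (wy p.1 p.2) p.2)
    (hxc : ContinuousOn (fun p : ℝ × ℝ ↦ wx p.1 p.2) U)
    (hyc : ContinuousOn (fun p : ℝ × ℝ ↦ wy p.1 p.2) U) {p : ℝ × ℝ} (hp : p ∈ U) :
    HasFDerivAt (fun q : ℝ × ℝ ↦ w q.1 q.2)
      ((ContinuousLinearMap.toSpanSingleton ℝ (wx p.1 p.2)).coprod
        (ContinuousLinearMap.toSpanSingleton ℝ (wy p.1 p.2))) p := by
  have hpU : U ∈ 𝓝 p := hU.mem_nhds hp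
  have hspan : Continuous (ContinuousLinearMap.toSpanSingleton ℝ : F → ℝ →L[ℝ] F) :=
    (ContinuousLinearMap.toSpanSingletonCLE (𝕜 := ℝ) (E := F)).continuous
  exact (hasStrictFDerivAt_uncurry_coprod (f := w)
    (f₁ := fun x y ↦ .toSpanSingleton ℝ (wx x y)) (f₂ := fun x y ↦ .toSpanSingleton ℝ (wy x y))
    (eventually_of_mem hpU fun q hq ↦ (hx q hq).hasFDerivAt)
    (eventually_of_mem hpU fun q hq ↦ (hy q hq).hasFDerivAt)
    (hspan.continuousAt.comp (hxc.continuousAt hpU))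
    (hspan.continuousAt.comp (hyc.continuousAt hpU))).hasFDerivAt

theorem IsTransportSolutionOn.of_continuousOn_partials {w wx wy : ℝ → ℝ → E} (hU : IsOpen U)
    (hx : ∀ p ∈ U, HasDerivAt (fun t ↦ w t p.2) (wx p.1 p.2) p.1)
    (hy : ∀ p ∈ U, HasDerivAt (fun t ↦ w p.1 t) (wy p.1 p.2) p.2)
    (hxc : ContinuousOn (fun p : ℝ × ℝ ↦ wx p.1 p.2) U)
    (hyc : ContinuousOn (fun p : ℝ × ℝ ↦ wy p.1 p.2) U)
    (htr : ∀ p ∈ U, wx p.1 p.2 + c p • wy p.1 p.2 = 0) :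
    IsTransportSolutionOn c (fun p ↦ w p.1 p.2) U := by
  intro p hp
  have hw := hasFDerivAt_of_continuousOn_partials hU hx hy hxc hyc hp
  refine ⟨hw.differentiableAt, ?_⟩
  simpa [hw.fderiv] using htr p hp

theorem exists_forall_apply_eq_smul_of_transport {V : Type*} [AddCommGroup V] [Module ℂ V]
    {a : ℂ} {A : ℝ × ℝ →ₗ[ℝ] V} {B : ℝ × ℝ →ₗ[ℝ] ℂ}
    (hA : A (1, 0) + a • A (0, 1) = 0) (hB : B (1, 0) + a * B (0, 1) = 0) (hB₀ : B ≠ 0) :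
    ∃ v : V, ∀ h, A h = B h • v := by
  have expand (h : ℝ × ℝ) : h = h.1 • ((1, 0) : ℝ × ℝ) + h.2 • ((0, 1) : ℝ × ℝ) := by simp
  have hBx : B (1, 0) = -(a * B (0, 1)) := eq_neg_of_add_eq_zero_left hB
  have hAx : A (1, 0) = -(a • A (0, 1)) := eq_neg_of_add_eq_zero_left hA
  have hBy : B (0, 1) ≠ 0 := by
    intro hzero
    refine hB₀ (LinearMap.ext fun h ↦ ?_)
    rw [expand h, map_add, map_smul, map_smul, hBx, hzero]
    simp
  refine ⟨(B (0, 1))⁻¹ • A (0, 1), fun h ↦ ?_⟩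
  rw [expand h]
  have hcoeff : (h.1 * -(a * B (0, 1)) + h.2 * B (0, 1)) * (B (0, 1))⁻¹ = h.2 - h.1 * a := by
    field_simp
    ring
  simp only [map_add, map_smul, hAx, hBx, smul_smul, real_smul, hcoeff]
  module

theorem fderiv_comp_fderiv_symm {𝕜 F G : Type*} [NontriviallyNormedField 𝕜]
    [NormedAddCommGroup F] [NormedSpace 𝕜 F] [NormedAddCommGroup G] [NormedSpace 𝕜 G]
    (e : OpenPartialHomeomorph F G) {p : F} (hp : p ∈ e.source) (he : DifferentiableAt 𝕜 e p)
    (hsymm : DifferentiableAt 𝕜 e.symm (e p)) :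
    fderiv 𝕜 e p ∘L fderiv 𝕜 e.symm (e p) = .id 𝕜 G := by
  have hcomp : HasFDerivAt (e ∘ e.symm) (fderiv 𝕜 e p ∘L fderiv 𝕜 e.symm (e p)) (e p) :=
    HasFDerivAt.comp (e p) (by simpa only [e.left_inv hp] using he.hasFDerivAt)
      hsymm.hasFDerivAt
  exact hcomp.unique <|
    (hasFDerivAt_id (e p)).congr_of_eventuallyEq (e.eventually_right_inverse' hp)

theorem IsTransportSolutionOn.differentiableOn_comp_symm {w : ℝ × ℝ → E}
    (hw : IsTransportSolutionOn c w U) {e : OpenPartialHomeomorph (ℝ × ℝ) ℂ}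
    (he : IsTransportSolutionOn c e e.source) (hsymm : DifferentiableOn ℝ e.symm e.target)
    (hUe : U ⊆ e.source) : DifferentiableOn ℂ (w ∘ e.symm) (e '' U) := by
  rintro _ ⟨p, hp, rfl⟩
  obtain ⟨hwdiff, hwtransport⟩ := hw p hp
  obtain ⟨hediff, hetransport⟩ := he p (hUe hp)
  have hsymmdiff : DifferentiableAt ℝ e.symm (e p) :=
    hsymm.differentiableAt (e.open_target.mem_nhds (e.map_source (hUe hp)))
  have hinv (h : ℂ) : fderiv ℝ e p (fderiv ℝ e.symm (e p) h) = h :=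
    DFunLike.congr_fun (fderiv_comp_fderiv_symm e (hUe hp) hediff hsymmdiff) h
  have hne : (fderiv ℝ e p).toLinearMap ≠ 0 := fun hzero ↦
    one_ne_zero ((hinv 1).symm.trans (LinearMap.congr_fun hzero _))
  obtain ⟨v, hv⟩ := exists_forall_apply_eq_smul_of_transport
    (A := (fderiv ℝ w p).toLinearMap) hwtransport hetransport hne
  have hcomp : HasFDerivAt (w ∘ e.symm) (fderiv ℝ w p ∘L fderiv ℝ e.symm (e p)) (e p) :=
    HasFDerivAt.comp (e p) (by simpa only [e.left_inv (hUe hp)] using hwdiff.hasFDerivAt)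
      hsymmdiff.hasFDerivAt
  have hlinear : (ContinuousLinearMap.toSpanSingleton ℂ v).restrictScalars ℝ =
      fderiv ℝ w p ∘L fderiv ℝ e.symm (e p) := by
    ext h
    simpa [hinv] using (hv (fderiv ℝ e.symm (e p) h)).symm
  exact (hasFDerivAt_of_restrictScalars ℝ hcomp hlinear).differentiableAt.differentiableWithinAt

theorem IsTransportSolutionOn.eqOn_of_frequently_eq [CompleteSpace E] {w₁ w₂ : ℝ × ℝ → E}
    (hw₁ : IsTransportSolutionOn c w₁ U) (hw₂ : IsTransportSolutionOn c w₂ U)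
    {e : OpenPartialHomeomorph (ℝ × ℝ) ℂ} (he : IsTransportSolutionOn c e e.source)
    (hsymm : DifferentiableOn ℝ e.symm e.target) (hUe : U ⊆ e.source) (hUopen : IsOpen U)
    (hUconn : IsPreconnected U) {p₀ : ℝ × ℝ} (hp₀ : p₀ ∈ U)
    (hfreq : ∃ᶠ p in 𝓝[≠] p₀, w₁ p = w₂ p) : EqOn w₁ w₂ U := by
  have hVo : IsOpen (e '' U) := e.isOpen_image_of_subset_source hUopen hUe
  have htendsto : Tendsto e (𝓝[≠] p₀) (𝓝[≠] (e p₀)) :=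
    tendsto_nhdsWithin_iff.2 ⟨(e.continuousAt (hUe hp₀)).tendsto.mono_left nhdsWithin_le_nhds,
      e.eventually_ne_nhdsWithin (hUe hp₀)⟩
  have hleft : ∀ᶠ p in 𝓝[≠] p₀, e.symm (e p) = p :=
    (e.eventually_left_inverse (hUe hp₀)).filter_mono nhdsWithin_le_nhds
  have hfreq' : ∃ᶠ z in 𝓝[≠] (e p₀), (w₁ ∘ e.symm) z = (w₂ ∘ e.symm) z :=
    htendsto.frequently <| (hfreq.and_eventually hleft).mono fun p ⟨hp, hl⟩ ↦ by
      simp only [Function.comp_apply, hl, hp]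
  have hEq : EqOn (w₁ ∘ e.symm) (w₂ ∘ e.symm) (e '' U) :=
    ((hw₁.differentiableOn_comp_symm he hsymm hUe).analyticOnNhd hVo)
      |>.eqOn_of_preconnected_of_frequently_eq
        ((hw₂.differentiableOn_comp_symm he hsymm hUe).analyticOnNhd hVo)
        (hUconn.image e (e.continuousOn.mono hUe)) (mem_image_of_mem e hp₀) hfreq'
  intro p hp
  simpa only [Function.comp_apply, e.left_inv (hUe hp)] using hEq (mem_image_of_mem e hp)

end TransportEquation

theorem frequently_nhdsNE_of_forall_vertical {X Y : Type*} [TopologicalSpace X]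
    [TopologicalSpace Y] {p : X × Y} [(𝓝[≠] p.2).NeBot] {U : Set (X × Y)} (hU : U ∈ 𝓝 p)
    {P : X × Y → Prop} (hP : ∀ q ∈ U, q.1 = p.1 → P q) : ∃ᶠ q in 𝓝[≠] p, P q := by
  have hcont : Tendsto (Prod.mk p.1) (𝓝 p.2) (𝓝 p) := (Continuous.prodMk_right p.1).tendsto p.2
  have htendsto : Tendsto (Prod.mk p.1) (𝓝[≠] p.2) (𝓝[≠] p) :=
    hcont.inf <| tendsto_principal_principal.2 fun y hy h ↦ hy (congrArg Prod.snd h)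
  refine htendsto.frequently (Eventually.frequently ?_)
  filter_upwards [(hcont.eventually hU).filter_mono nhdsWithin_le_nhds] with y hy
  exact hP _ hy rfl

theorem lamC_re (δ x y : ℝ) : (lamC δ x y).re = y / (1 + x) := by
  rw [lamC, ← ofReal_one, ← ofReal_add, div_ofReal_re]
  simp

theorem lamC_im (δ x y : ℝ) : (lamC δ x y).im = δ / (1 + x) := by
  rw [lamC, ← ofReal_one, ← ofReal_add, div_ofReal_im]
  simp

theorem hasDerivAt_lamC_fst (δ y : ℝ) {x : ℝ} (hx : x ≠ -1) :
    HasDerivAt (fun t ↦ lamC δ t y) (-lamC δ x y / (1 + x)) x := by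
  have hx' : (1 + x : ℂ) ≠ 0 := mod_cast mt eq_neg_of_add_eq_zero_right hx
  have hden : HasDerivAt (fun t : ℝ ↦ (1 + t : ℂ)) 1 x := by
    simpa using (hasDerivAt_id x).ofReal_comp.const_add 1
  have hquot : HasDerivAt (fun t ↦ lamC δ t y)
      ((0 * (1 + x) - (y + δ * I) * 1) / (1 + x) ^ 2) x :=
    (hasDerivAt_const x ((y : ℂ) + δ * I)).fun_div hden hx'
  refine hquot.congr_deriv ?_
  rw [lamC]
  field_simp
  ring

theorem hasDerivAt_lamC_snd (δ x y : ℝ) :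
    HasDerivAt (fun t ↦ lamC δ x t) (1 / (1 + x)) y :=
  ((hasDerivAt_id y).ofReal_comp.add_const _).div_const _

theorem isTransportSolutionOn_lamC (δ : ℝ) :
    IsTransportSolutionOn (fun p ↦ lamC δ p.1 p.2) (fun p ↦ lamC δ p.1 p.2) {p | p.1 ≠ -1} := by
  have hne (p : ℝ × ℝ) (hp : p.1 ≠ -1) : (1 + p.1 : ℂ) ≠ 0 :=
    mod_cast mt eq_neg_of_add_eq_zero_right hp
  refine .of_continuousOn_partials (wx := fun x y ↦ -lamC δ x y / (1 + x))
    (wy := fun x _ ↦ 1 / (1 + x)) (isOpen_ne_fun continuous_fst continuous_const)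
    (fun p hp ↦ hasDerivAt_lamC_fst δ p.2 hp) (fun p _ ↦ hasDerivAt_lamC_snd δ p.1 p.2)
    ?_ ?_ (fun p _ ↦ ?_)
  · unfold lamC
    fun_prop (disch := exact hne)
  · fun_prop (disch := exact hne)
  · rw [smul_eq_mul]
    ring

theorem differentiableOn_lamC_inverse (δ : ℝ) :
    DifferentiableOn ℝ (fun z : ℂ ↦ (δ / z.im - 1, δ * z.re / z.im)) {z | z.im ≠ 0} := by
  simp only [div_eq_mul_inv]
  intro z (hz : z.im ≠ 0)
  have him : DifferentiableAt ℝ (fun z : ℂ ↦ z.im⁻¹) z := imCLM.differentiableAt.fun_inv hz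
  have hre : DifferentiableAt ℝ (fun z : ℂ ↦ z.re) z := reCLM.differentiableAt
  exact (((him.const_mul δ).sub_const 1).prodMk ((hre.const_mul δ).mul him)).differentiableWithinAt

/-- The function `λ` as a global complex coordinate on the plane with the line `x = -1` removed,
in which solutions of the transport equation become holomorphic. -/
noncomputable def lamChart {δ : ℝ} (hδ : δ ≠ 0) : OpenPartialHomeomorph (ℝ × ℝ) ℂ where
  toFun p := lamC δ p.1 p.2
  invFun z := (δ / z.im - 1, δ * z.re / z.im)
  source := {p | p.1 ≠ -1}
  target := {z | z.im ≠ 0}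
  map_source' p hp := by
    have hx : 1 + p.1 ≠ 0 := mt eq_neg_of_add_eq_zero_right hp
    simpa only [mem_ofPred_eq, lamC_im] using div_ne_zero hδ hx
  map_target' z hz := by
    have hz : z.im ≠ 0 := hz
    simp [sub_eq_iff_eq_add, hδ, hz]
  left_inv' p hp := by
    have hx : 1 + p.1 ≠ 0 := mt eq_neg_of_add_eq_zero_right hp
    ext <;> simp only [lamC_re, lamC_im] <;> field_simp
    ring
  right_inv' z hz := by
    have hz : z.im ≠ 0 := hz
    apply Complex.ext <;> simp only [lamC_re, lamC_im, add_sub_cancel] <;> field_simp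
  open_source := isOpen_ne_fun continuous_fst continuous_const
  open_target := isOpen_ne_fun continuous_im continuous_const
  continuousOn_toFun p hp :=
    (isTransportSolutionOn_lamC δ p hp).1.continuousAt.continuousWithinAt
  continuousOn_invFun := (differentiableOn_lamC_inverse δ).continuousOn

theorem stmt_19_general {E : Type*} [NormedAddCommGroup E] [NormedSpace ℂ E] [CompleteSpace E]
    {δ : ℝ} (hδ : δ ≠ 0) {U : Set (ℝ × ℝ)} (hUopen : IsOpen U) (hUconn : IsPreconnected U)
    (hUΩ : U ⊆ {p | p.1 ≠ -1}) {w₁ w₂ : ℝ × ℝ → E}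
    (hw₁ : IsTransportSolutionOn (fun p ↦ lamC δ p.1 p.2) w₁ U)
    (hw₂ : IsTransportSolutionOn (fun p ↦ lamC δ p.1 p.2) w₂ U)
    {p₀ : ℝ × ℝ} (hp₀ : p₀ ∈ U) (hfreq : ∃ᶠ p in 𝓝[≠] p₀, w₁ p = w₂ p) : EqOn w₁ w₂ U :=
  hw₁.eqOn_of_frequently_eq hw₂ (e := lamChart hδ) (isTransportSolutionOn_lamC δ)
    (differentiableOn_lamC_inverse δ) hUΩ hUopen hUconn hp₀ hfreq

/-- uniqueness along characteristics. If `w₁, w₂` are C¹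
solutions of the transport equation `w_x + λ w_y = 0` on an open connected
set `U ⊆ Ω` meeting the line `Γ = {x = 0}`, agreeing on `Γ ∩ U`, and every
point of `U` is joined to `Γ ∩ U` by a characteristic curve `y = C(1+x)`
lying in `U`, then `w₁ = w₂` on `U`. -/
theorem stmt_19 (δ : ℝ) (hδ : 0 < δ)
    (U : Set (ℝ × ℝ)) (hUopen : IsOpen U) (hUconn : IsConnected U)
    (hUΩ : U ⊆ {p : ℝ × ℝ | -1 < p.1})
    (hUΓ : (U ∩ {p : ℝ × ℝ | p.1 = 0}).Nonempty)
    (w₁ w₂ : ℝ → ℝ → ℂ) (w1x w1y w2x w2y : ℝ → ℝ → ℂ)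
    (hw1x : ∀ p ∈ U, HasDerivAt (fun t : ℝ => w₁ t p.2) (w1x p.1 p.2) p.1)
    (hw1y : ∀ p ∈ U, HasDerivAt (fun t : ℝ => w₁ p.1 t) (w1y p.1 p.2) p.2)
    (hw2x : ∀ p ∈ U, HasDerivAt (fun t : ℝ => w₂ t p.2) (w2x p.1 p.2) p.1)
    (hw2y : ∀ p ∈ U, HasDerivAt (fun t : ℝ => w₂ p.1 t) (w2y p.1 p.2) p.2)
    (hw1xc : ContinuousOn (fun p : ℝ × ℝ => w1x p.1 p.2) U)
    (hw1yc : ContinuousOn (fun p : ℝ × ℝ => w1y p.1 p.2) U)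
    (hw2xc : ContinuousOn (fun p : ℝ × ℝ => w2x p.1 p.2) U)
    (hw2yc : ContinuousOn (fun p : ℝ × ℝ => w2y p.1 p.2) U)
    (htr1 : ∀ p ∈ U, w1x p.1 p.2 + lamC δ p.1 p.2 * w1y p.1 p.2 = 0)
    (htr2 : ∀ p ∈ U, w2x p.1 p.2 + lamC δ p.1 p.2 * w2y p.1 p.2 = 0)
    (hbd : ∀ p ∈ U, p.1 = 0 → w₁ p.1 p.2 = w₂ p.1 p.2)
    (hchar : ∀ p ∈ U, ∃ C : ℝ, p.2 = C * (1 + p.1) ∧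
      ((0 : ℝ), C) ∈ U ∧ ∀ t ∈ Set.uIcc (0 : ℝ) p.1, (t, C * (1 + t)) ∈ U) :
    ∀ p ∈ U, w₁ p.1 p.2 = w₂ p.1 p.2 := by
  obtain ⟨p₀, hp₀, hx₀⟩ := hUΓ
  exact stmt_19_general hδ.ne' hUopen hUconn.isPreconnected (fun _ hp ↦ (hUΩ hp).ne')
    (.of_continuousOn_partials hUopen hw1x hw1y hw1xc hw1yc htr1)
    (.of_continuousOn_partials hUopen hw2x hw2y hw2xc hw2yc htr2) hp₀
    (frequently_nhdsNE_of_forall_vertical (hUopen.mem_nhds hp₀)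
      fun q hq hqx ↦ hbd q hq (hqx.trans hx₀))
end
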